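/- arXiv:2309.10377 — 2 statements merged into one kernel-verified Lean document; each statement's English description precedes it below -/
import Mathlib

section
/- Let D = (V, A) be a directed graph with nonnegative arc costs c, let p₁ be a shortest simple s-t-path, and let p₂ be a second shortest simple s-t-path with p₂ ≠ p₁. Let v be the deviation node of p₂, i.e., p₂ = p₁[s..v] ∘ (v,w) ∘ p₂[w..t] with p₁[s..v] the longest common prefix of p₂ and p₁ and (v,w) not an arc of p₁, and let (v,w₁) be the arc of p₁ leaving v. Then the suffix p₂[v..t] = (v,w) ∘ p₂[w..t] is a shortest v-t-path in the graph D with the single arc (v,w₁) deleted: for every simple v-t-path r in D not using the arc (v,w₁), c(p₂[v..t]) ≤ c(r). In particular, a second shortest simple s-t-path belongs to the solution set of the Replacement Path problem for p₁. -/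
/-- The arcs of a walk, given as the list of consecutive vertex pairs. -/
def arcsOf {V : Type*} (q : List V) : List (V × V) := q.zip q.tail

/-- `q` is a walk (a finite sequence of consecutive arcs, possibly repeating
nodes) from `s` to `t` in the digraph on `V` with arc relation `A`. -/
def IsDiWalk {V : Type*} (A : V → V → Prop) (s t : V) (q : List V) : Prop :=
  q ≠ [] ∧ q.head? = some s ∧ q.getLast? = some t ∧ q.Chain' A

/-- `q` is a simple path from `s` to `t`: a walk visiting no node twice. -/
def IsDiPath {V : Type*} (A : V → V → Prop) (s t : V) (q : List V) : Prop :=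
  IsDiWalk A s t q ∧ q.Nodup

/-- The cost of a walk: the sum of the costs of its arcs. -/
def pathCost {V : Type*} (c : V → V → NNReal) (q : List V) : NNReal :=
  ((arcsOf q).map fun e => c e.1 e.2).sum

/-- Second component `γ_{p,2}` of the biobjective cost: the number of arcs of
`q` (with multiplicity along `q`) that are arcs of `p`. -/
def gammaTwo {V : Type*} [DecidableEq V] (p q : List V) : ℕ :=
  ((arcsOf q).filter fun e => decide (e ∈ arcsOf p)).length

/-- `q` dominates `q'` w.r.t. the biobjective cost `γ_p = (pathCost c ·, gammaTwo p ·)`. -/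
def DominatesBi {V : Type*} [DecidableEq V] (c : V → V → NNReal) (p q q' : List V) : Prop :=
  pathCost c q ≤ pathCost c q' ∧ gammaTwo p q ≤ gammaTwo p q' ∧
    (pathCost c q < pathCost c q' ∨ gammaTwo p q < gammaTwo p q')

/-- A simple `s`-`t`-path is efficient w.r.t. `γ_p` if no simple `s`-`t`-path dominates it. -/
def EfficientPath {V : Type*} [DecidableEq V] (A : V → V → Prop) (c : V → V → NNReal)
    (s t : V) (p q : List V) : Prop :=
  IsDiPath A s t q ∧ ∀ r, IsDiPath A s t r → ¬ DominatesBi c p r q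

/-- `p` is a shortest simple `s`-`t`-path w.r.t. `c`. -/
def IsShortestPath {V : Type*} (A : V → V → Prop) (c : V → V → NNReal)
    (s t : V) (p : List V) : Prop :=
  IsDiPath A s t p ∧ ∀ r, IsDiPath A s t r → pathCost c p ≤ pathCost c r

/-- `p₂` is a second shortest simple `s`-`t`-path (w.r.t. the shortest path `p₁`). -/
def IsSecondShortestPath {V : Type*} (A : V → V → Prop) (c : V → V → NNReal)
    (s t : V) (p₁ p₂ : List V) : Prop :=
  IsDiPath A s t p₂ ∧ p₂ ≠ p₁ ∧
    ∀ r, IsDiPath A s t r → r ≠ p₁ → pathCost c p₂ ≤ pathCost c r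

/-!
Replacing the suffix of `p₂` by a `v`-`t`-walk `r` that avoids the arc `(v, w₁)` gives an
`s`-`t`-walk, whose loop erasure is a simple `s`-`t`-path `q` of no larger cost. Neither `r` nor the
prefix of `p₂`, which visits `v` only at its end, contains `(v, w₁)`, so `q` avoids this arc of
`p₁`. Hence `q ≠ p₁` competes with `p₂`, and cancelling the cost of the common prefix compares the
suffixes.
-/

section Walks

variable {V : Type*} {A : V → V → Prop} {s t u v : V} {p q x y : List V}

theorem arcsOf_cons_cons (u v : V) (q : List V) :
    arcsOf (u :: v :: q) = (u, v) :: arcsOf (v :: q) := rfl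

theorem arcsOf_append_cons (x : List V) (u : V) (y : List V) :
    arcsOf (x ++ u :: y) = arcsOf (x ++ [u]) ++ arcsOf (u :: y) := by
  induction x with
  | nil => rfl
  | cons a x ih =>
    cases x with
    | nil => rfl
    | cons b x => exact congrArg ((a, b) :: ·) ih

theorem pathCost_append_cons (c : V → V → NNReal) (x : List V) (u : V) (y : List V) :
    pathCost c (x ++ u :: y) = pathCost c (x ++ [u]) + pathCost c (u :: y) := by
  simp only [pathCost, arcsOf_append_cons x u y, List.map_append, List.sum_append]

theorem pathCost_le_of_arcsOf_sublist (c : V → V → NNReal) (h : (arcsOf p).Sublist (arcsOf q)) :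
    pathCost c p ≤ pathCost c q :=
  (h.map _).sum_le_sum fun _ _ => zero_le

theorem fst_mem_of_mem_arcsOf_append_singleton (h : (u, v) ∈ arcsOf (x ++ [t])) : u ∈ x := by
  induction x with
  | nil => simp [arcsOf] at h
  | cons a x ih =>
    cases x with
    | nil => simp_all [arcsOf]
    | cons b x =>
      rcases List.mem_cons.mp h with heq | hmem
      · exact List.mem_cons.mpr (.inl (congrArg Prod.fst heq))
      · exact List.mem_cons_of_mem a (ih hmem)

theorem mk_mem_arcsOf_of_prefix (h : x ++ [u, v] <+: q) : (u, v) ∈ arcsOf q := by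
  obtain ⟨y, rfl⟩ := h
  rw [List.append_assoc, List.cons_append, arcsOf_append_cons, List.cons_append, arcsOf_cons_cons]
  exact List.mem_append_right _ List.mem_cons_self

theorem IsDiWalk.exists_eq_cons (h : IsDiWalk A s t q) : ∃ q', q = s :: q' :=
  List.head?_eq_some_iff.mp h.2.1

theorem isDiWalk_iff :
    IsDiWalk A s t q ↔ q.head? = some s ∧ q.getLast? = some t ∧ q.IsChain A :=
  ⟨And.right, fun h => ⟨by rintro rfl; simp at h, h⟩⟩

theorem isDiWalk_cons_cons_iff :
    IsDiWalk A s t (u :: v :: q) ↔ u = s ∧ A u v ∧ IsDiWalk A v t (v :: q) := by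
  simp only [isDiWalk_iff, List.head?_cons, Option.some_inj, List.getLast?_cons_cons,
    List.isChain_cons_cons]
  tauto

theorem isDiWalk_append_cons_iff :
    IsDiWalk A s t (x ++ u :: y) ↔ IsDiWalk A s u (x ++ [u]) ∧ IsDiWalk A u t (u :: y) := by
  have hhead : (x ++ u :: y).head? = (x ++ [u]).head? := by cases x <;> rfl
  have hlast : (x ++ u :: y).getLast? = (u :: y).getLast? :=
    List.getLast?_append_of_ne_nil x (List.cons_ne_nil u y)
  rw [isDiWalk_iff, isDiWalk_iff, isDiWalk_iff, hhead, hlast, List.isChain_split,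
    List.getLast?_concat, List.head?_cons]
  tauto

theorem IsDiPath.of_append_cons (h : IsDiPath A s t (x ++ u :: y)) : IsDiPath A u t (u :: y) :=
  ⟨(isDiWalk_append_cons_iff.mp h.1).2, h.2.of_append_right⟩

theorem IsDiPath.cons (h : IsDiPath A v t q) (hA : A u v) (hu : u ∉ q) :
    IsDiPath A u t (u :: q) := by
  obtain ⟨q, rfl⟩ := h.1.exists_eq_cons
  exact ⟨isDiWalk_cons_cons_iff.mpr ⟨rfl, hA, h.1⟩, h.2.cons hu⟩

/-- Loop erasure: a path from the second node on is extended by the first arc, unless it returns to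
the first node, in which case everything before that return is dropped. -/
theorem IsDiWalk.exists_isDiPath_arcsOf_sublist (h : IsDiWalk A s t q) :
    ∃ p, IsDiPath A s t p ∧ (arcsOf p).Sublist (arcsOf q) := by
  obtain ⟨q, rfl⟩ := h.exists_eq_cons
  induction q generalizing s with
  | nil => exact ⟨[s], ⟨h, List.nodup_singleton s⟩, List.Sublist.refl _⟩
  | cons v q ih =>
    obtain ⟨-, hA, hq⟩ := isDiWalk_cons_cons_iff.mp h
    obtain ⟨p, hp, hsub⟩ := ih hq
    rw [arcsOf_cons_cons]
    by_cases hs : s ∈ p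
    · obtain ⟨x, y, rfl⟩ := List.append_of_mem hs
      rw [arcsOf_append_cons] at hsub
      exact ⟨s :: y, hp.of_append_cons, ((List.sublist_append_right _ _).trans hsub).cons _⟩
    · refine ⟨s :: p, hp.cons hA hs, ?_⟩
      obtain ⟨p, rfl⟩ := hp.1.exists_eq_cons
      exact hsub.cons_cons (s, v)

end Walks

theorem secondShortest_suffix_shortest_replacement_general {V : Type*}
    {A : V → V → Prop} {c : V → V → NNReal} {s t v w₁ : V} {p₁ x y : List V}
    (hp₂ : IsSecondShortestPath A c s t p₁ (x ++ v :: y)) (hw₁ : (v, w₁) ∈ arcsOf p₁)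
    {r : List V} (hr : IsDiWalk A v t r) (hvr : (v, w₁) ∉ arcsOf r) :
    pathCost c (v :: y) ≤ pathCost c r := by
  obtain ⟨⟨hwalk, hnodup⟩, -, hmin⟩ := hp₂
  obtain ⟨r, rfl⟩ := hr.exists_eq_cons
  have hdetour : IsDiWalk A s t (x ++ v :: r) :=
    isDiWalk_append_cons_iff.mpr ⟨(isDiWalk_append_cons_iff.mp hwalk).1, hr⟩
  obtain ⟨q, hq, harcs⟩ := hdetour.exists_isDiPath_arcsOf_sublist
  have hv : v ∉ x := (List.nodup_middle.mp hnodup).notMem ∘ List.mem_append_left y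
  have havoid : (v, w₁) ∉ arcsOf (x ++ v :: r) := by
    rw [arcsOf_append_cons, List.mem_append, not_or]
    exact ⟨hv ∘ fst_mem_of_mem_arcsOf_append_singleton, hvr⟩
  have hne : q ≠ p₁ := by
    rintro rfl
    exact havoid (harcs.subset hw₁)
  have hcost := calc
    pathCost c (x ++ [v]) + pathCost c (v :: y) = pathCost c (x ++ v :: y) :=
      (pathCost_append_cons c x v y).symm
    _ ≤ pathCost c q := hmin q hq hne
    _ ≤ pathCost c (x ++ v :: r) := pathCost_le_of_arcsOf_sublist c harcs
    _ = pathCost c (x ++ [v]) + pathCost c (v :: r) := pathCost_append_cons c x v r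
  exact le_of_add_le_add_left hcost

/-- Let `p₁` be a shortest and `p₂` a second shortest simple
`s`-`t`-path, deviating from `p₁` at the deviation node `v` via the deviation arc `(v,w)`
(`pre = p₁[s..v]` is the longest common prefix of `p₂` and `p₁`), and let `(v,w₁)` be the
arc of `p₁` leaving `v`. Then the suffix `p₂[v..t] = v :: w :: suf` is a shortest
`v`-`t`-path in `D` with the single arc `(v,w₁)` deleted: `c(p₂[v..t]) ≤ c(r)` for every
simple `v`-`t`-path `r` not using the arc `(v,w₁)`. In particular, a second shortest
simple `s`-`t`-path belongs to the Replacement Path solution set for `p₁`. -/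
theorem secondShortest_suffix_shortest_replacement {V : Type*}
    (A : V → V → Prop) (c : V → V → NNReal) (s t : V) (p₁ p₂ : List V)
    (hp₁ : IsShortestPath A c s t p₁)
    (hp₂ : IsSecondShortestPath A c s t p₁ p₂)
    (pre : List V) (v w w₁ : V) (suf : List V)
    (hsplit : p₂ = pre ++ w :: suf)
    (hv : pre.getLast? = some v)
    (hpre : pre <+: p₁)
    (hlongest : ¬ (pre ++ [w]) <+: p₁)
    (hw₁ : (pre ++ [w₁]) <+: p₁) :
    ∀ r, IsDiPath A v t r → (v, w₁) ∉ arcsOf r →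
      pathCost c (v :: w :: suf) ≤ pathCost c r := by
  obtain ⟨x, rfl⟩ := List.getLast?_eq_some_iff.mp hv
  rw [List.append_assoc] at hw₁
  rw [hsplit, List.append_assoc] at hp₂
  exact fun r hr hvr => secondShortest_suffix_shortest_replacement_general hp₂
    (mk_mem_arcsOf_of_prefix hw₁) hr.1 hvr
end

section
/- Let D = (V, A) be a directed graph with nonnegative arc costs c, let s, t ∈ V, let p be a shortest simple s-t-path with ℓ arcs, and assume there exist at least two simple s-t-paths. Then there exists a simple s-t-path q with γ_{p,2}(q) < ℓ that is efficient with respect to γ_p, i.e., the set of efficient simple s-t-paths whose second γ_p-cost component is strictly less than ℓ is nonempty. -/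
/-!
A simple `s`-`t`-path `q` uses `ℓ` arcs of `p` only if it contains every arc of `p`. Every
node has at most one successor along `q`, so `p` is then an initial segment of `q`, and it ends at
`t`, which `q` visits only at its end: thus `q = p`. Hence any other simple path `q` has
`γ_{p,2}(q) < ℓ`. Domination is the strict product order on cost vectors, so a minimal cost vector
below that of `q` belongs to an efficient path, whose second component is still less than `ℓ`.
-/

section Arcs

variable {V : Type*} {p q : List V}

theorem mem_arcsOf_iff_getElem? {a b : V} :
    (a, b) ∈ arcsOf q ↔ ∃ i, q[i]? = some a ∧ q[i + 1]? = some b := by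
  simp only [arcsOf, List.mem_iff_getElem?, List.getElem?_zip_eq_some, List.getElem?_tail]

theorem nodup_arcsOf (hq : q.Nodup) : (arcsOf q).Nodup := by
  have map_snd : (arcsOf q).map Prod.snd = q.tail := List.map_snd_zip (by simp)
  exact .of_map Prod.snd (map_snd ▸ hq.tail)

theorem prefix_of_arcsOf_subset (hq : q.Nodup) (hhead : p.head? = q.head?)
    (hsub : arcsOf p ⊆ arcsOf q) : p <+: q := by
  rw [List.prefix_iff_getElem?]
  intro i hi
  induction i with
  | zero => rw [← List.head?_eq_getElem?, ← hhead, List.head?_eq_getElem?, List.getElem?_eq_getElem]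
  | succ i ih =>
    have hi' : i < p.length := by lia
    have arc_mem : (p[i], p[i + 1]) ∈ arcsOf p :=
      mem_arcsOf_iff_getElem?.mpr ⟨i, List.getElem?_eq_getElem hi', List.getElem?_eq_getElem hi⟩
    obtain ⟨j, hj, hj_succ⟩ := mem_arcsOf_iff_getElem?.mp (hsub arc_mem)
    obtain ⟨hj_lt, -⟩ := List.getElem?_eq_some_iff.mp hj
    obtain rfl : j = i := (List.getElem?_inj hj_lt hq).mp (hj.trans (ih hi').symm)
    exact hj_succ

theorem eq_of_prefix_of_getLast?_eq (hq : q.Nodup) (hpre : p <+: q)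
    (hlast : p.getLast? = q.getLast?) : p = q := by
  obtain ⟨r, rfl⟩ := hpre
  rcases r.eq_nil_or_concat with rfl | ⟨r, b, rfl⟩
  · simp
  · have mem_left : b ∈ p := List.mem_of_getLast? (by simpa using hlast)
    exact absurd (by simp) (hq.disjoint mem_left)

theorem eq_of_arcsOf_subset (hq : q.Nodup) (hhead : p.head? = q.head?)
    (hlast : p.getLast? = q.getLast?) (hsub : arcsOf p ⊆ arcsOf q) : p = q :=
  eq_of_prefix_of_getLast?_eq hq (prefix_of_arcsOf_subset hq hhead hsub) hlast

variable [DecidableEq V]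

theorem arcsOf_subset_of_length_le_gammaTwo (hq : q.Nodup)
    (hle : (arcsOf p).length ≤ gammaTwo p q) : arcsOf p ⊆ arcsOf q := by
  have filter_subperm : ((arcsOf q).filter fun e => decide (e ∈ arcsOf p)).Subperm (arcsOf p) :=
    ((nodup_arcsOf hq).filter _).subperm fun _ he => of_decide_eq_true (List.mem_filter.mp he).2
  have filter_perm := filter_subperm.perm_of_length_le hle
  exact fun _ he => List.mem_of_mem_filter (filter_perm.mem_iff.mpr he)

theorem gammaTwo_lt_length_arcsOf {A : V → V → Prop} {s t : V} (hp : IsDiWalk A s t p)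
    (hq : IsDiPath A s t q) (hne : q ≠ p) : gammaTwo p q < (arcsOf p).length := by
  obtain ⟨-, hp_head, hp_last, -⟩ := hp
  obtain ⟨⟨-, hq_head, hq_last, -⟩, hq_nodup⟩ := hq
  contrapose! hne with hle
  have hsub : arcsOf p ⊆ arcsOf q := arcsOf_subset_of_length_le_gammaTwo hq_nodup hle
  exact (eq_of_arcsOf_subset hq_nodup (hp_head.trans hq_head.symm)
    (hp_last.trans hq_last.symm) hsub).symm

end Arcs

theorem finite_setOf_isDiPath {V : Type*} [Finite V] (A : V → V → Prop) (s t : V) :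
    {q | IsDiPath A s t q}.Finite := by
  cases nonempty_fintype V
  exact (List.finite_length_le V (Fintype.card V)).subset fun q hq => hq.2.length_le_card

section Efficiency

variable {V : Type*} [DecidableEq V] {A : V → V → Prop} {c : V → V → NNReal} {s t : V}
  {p q q' : List V}

/-- The `γ_p`-cost vector of a walk. It takes values in `ℝ≥0 × ℕ` with the product order, whose
strict part is domination. -/
def biCost (c : V → V → NNReal) (p q : List V) : NNReal × ℕ := (pathCost c q, gammaTwo p q)

theorem dominatesBi_iff_biCost_lt : DominatesBi c p q q' ↔ biCost c p q < biCost c p q' := by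
  simp only [DominatesBi, biCost, Prod.mk_lt_mk]
  grind

theorem efficientPath_iff_minimalFor :
    EfficientPath A c s t p q ↔ MinimalFor (IsDiPath A s t) (biCost c p) q := by
  simp only [EfficientPath, minimalFor_iff_forall_lt, dominatesBi_iff_biCost_lt, imp_not_comm]

theorem isPWO_biCost_image {S : Set (List V)} (hwf : (pathCost c '' S).IsWF) :
    (biCost c p '' S).IsPWO :=
  (hwf.isPWO.prod (.of_linearOrder Set.univ)).mono <|
    Set.image_subset_iff.mpr fun _ hq => ⟨Set.mem_image_of_mem _ hq, Set.mem_univ _⟩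

theorem exists_efficientPath_biCost_le (hwf : (pathCost c '' {r | IsDiPath A s t r}).IsWF)
    (hq : IsDiPath A s t q) : ∃ r, EfficientPath A c s t p r ∧ biCost c p r ≤ biCost c p q := by
  obtain ⟨_, hle, ⟨r, hr, rfl⟩, hmin⟩ :=
    (isPWO_biCost_image (p := p) hwf).exists_le_minimal (Set.mem_image_of_mem _ hq)
  exact ⟨r, efficientPath_iff_minimalFor.mpr
    ⟨hr, fun _ hr' => hmin (Set.mem_image_of_mem _ hr')⟩, hle⟩

end Efficiency

theorem exists_efficient_gammaTwo_lt_general {V : Type*} [DecidableEq V] {A : V → V → Prop}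
    {c : V → V → NNReal} {s t : V} {p q : List V}
    (hwf : (pathCost c '' {r | IsDiPath A s t r}).IsWF) (hp : IsDiWalk A s t p)
    (hq : IsDiPath A s t q) (hne : q ≠ p) :
    ∃ r, EfficientPath A c s t p r ∧ gammaTwo p r < (arcsOf p).length := by
  obtain ⟨r, hr, hle⟩ := exists_efficientPath_biCost_le (p := p) hwf hq
  exact ⟨r, hr, hle.2.trans_lt (gammaTwo_lt_length_arcsOf hp hq hne)⟩

/-- If `p` is a shortest simple `s`-`t`-path with `ℓ` arcs and there
exist at least two simple `s`-`t`-paths, then there exists a simple `s`-`t`-path `q` with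
`γ_{p,2}(q) < ℓ` that is efficient w.r.t. `γ_p`. -/
theorem exists_efficient_gammaTwo_lt {V : Type*} [Fintype V] [DecidableEq V]
    (A : V → V → Prop) (c : V → V → NNReal) (s t : V) (p : List V) (ℓ : ℕ)
    (hp : IsShortestPath A c s t p) (hℓ : (arcsOf p).length = ℓ)
    (htwo : ∃ q₁ q₂ : List V, IsDiPath A s t q₁ ∧ IsDiPath A s t q₂ ∧ q₁ ≠ q₂) :
    ∃ q, EfficientPath A c s t p q ∧ gammaTwo p q < ℓ := by
  obtain ⟨q₁, q₂, h₁, h₂, h₁₂⟩ := htwo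
  have hnontrivial : {q | IsDiPath A s t q}.Nontrivial := ⟨q₁, h₁, q₂, h₂, h₁₂⟩
  obtain ⟨q, hq, hne⟩ := hnontrivial.exists_ne p
  exact hℓ ▸ exists_efficient_gammaTwo_lt_general
    ((finite_setOf_isDiPath A s t).image _).isWF hp.1.1 hq hne
end
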